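/- Let G = GP(Γ, 𝒢) be a non-degenerate graph product of groups. Suppose U ⊆ V(Γ) and g, x, y ∈ G are such that x ≠ 1, gxg⁻¹ = y, supp(y) ⊆ U, and no reduced word for g ends with a syllable whose vertex lies in supp(x). Then g can be written as a reduced word (h₁,...,h_r,h_{r+1},...,h_n) with h₁,...,h_r ∈ G_U and h_{r+1},...,h_n ∈ G_{link(supp(x))}. -/

import Mathlib

section GraphProduct

variable {V : Type} [Fintype V] (Γ : SimpleGraph V) (Gv : V → Type) [∀ v, Group (Gv v)]

/-- The commutation relators defining a graph product: for each edge `{u, v}` of `Γ`,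
the elements of `G_u` commute with the elements of `G_v` inside the free product. -/
def graphProductRels : Set (Monoid.CoprodI Gv) :=
  {x | ∃ (u v : V), Γ.Adj u v ∧ ∃ (a : Gv u) (b : Gv v),
    x = Monoid.CoprodI.of a * Monoid.CoprodI.of b *
      (Monoid.CoprodI.of a)⁻¹ * (Monoid.CoprodI.of b)⁻¹}

/-- The graph product of the groups `Gv` over the finite simple graph `Γ`: the free
product of the vertex groups modulo commutation of adjacent vertex groups. -/
def GraphProduct : Type :=
  Monoid.CoprodI Gv ⧸ Subgroup.normalClosure (graphProductRels Γ Gv)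

instance : Group (GraphProduct Γ Gv) :=
  inferInstanceAs (Group (Monoid.CoprodI Gv ⧸ Subgroup.normalClosure (graphProductRels Γ Gv)))

/-- The canonical map of a vertex group into the graph product. -/
def GraphProduct.of (v : V) : Gv v →* GraphProduct Γ Gv :=
  (QuotientGroup.mk' _).comp Monoid.CoprodI.of

/-- The full subgroup on a set `S` of vertices: the subgroup generated by the vertex
groups of the vertices in `S`. -/
def GraphProduct.full (S : Set V) : Subgroup (GraphProduct Γ Gv) :=
  ⨆ v ∈ S, (GraphProduct.of Γ Gv v).range

/-- A graph product is non-degenerate if all vertex groups are nontrivial and `Γ` has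
more than one vertex. -/
def GraphProduct.NonDegenerate : Prop :=
  (∀ v, Nontrivial (Gv v)) ∧ Nontrivial V

/-- The conjugate `g H g⁻¹` of a subgroup. -/
def conjSubgroup {G : Type*} [Group G] (g : G) (H : Subgroup G) : Subgroup G :=
  H.map (MulAut.conj g).toMonoidHom

/-- Edge distance at least `n` between two vertices of a graph (with the convention
that vertices in different components are at infinite distance). -/
def SimpleGraph.distAtLeast (n : ℕ) (a b : V) : Prop :=
  a ≠ b ∧ (¬ Γ.Reachable a b ∨ n ≤ Γ.dist a b)

/-- Two vertices are separated (w.r.t. the graph product) if their edge distance is at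
least 2 and the full subgroup on the intersection of their links is finite. -/
def GraphProduct.SeparatedPair (a b : V) : Prop :=
  a ≠ b ∧ ¬ Γ.Adj a b ∧
    Finite (GraphProduct.full Γ Gv (Γ.neighborSet a ∩ Γ.neighborSet b))

/-- The graph-theoretic diameter of `Γ` is at least `n`. -/
def SimpleGraph.diamAtLeast (n : ℕ) : Prop := ∃ a b : V, Γ.distAtLeast n a b

end GraphProduct

section Words

variable {V : Type} [Fintype V] (Γ : SimpleGraph V) (Gv : V → Type) [∀ v, Group (Gv v)]

/-- The element of the graph product represented by a word, i.e. a list of syllables. -/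
def GraphProduct.wordProd (w : List (Σ v : V, Gv v)) : GraphProduct Γ Gv :=
  (w.map fun s => GraphProduct.of Γ Gv s.1 s.2).prod

/-- A word is reduced for `g` if it represents `g`, has no trivial syllables, and has
minimal length among all words representing `g` (equivalently, by Green's normal form
theorem, no two of its syllables can be joined together). -/
def GraphProduct.IsReducedWord (w : List (Σ v : V, Gv v)) (g : GraphProduct Γ Gv) : Prop :=
  GraphProduct.wordProd Γ Gv w = g ∧ (∀ s ∈ w, s.2 ≠ 1) ∧
    ∀ w' : List (Σ v : V, Gv v), GraphProduct.wordProd Γ Gv w' = g → w.length ≤ w'.length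

/-- The support of `g`: the set of vertices whose vertex groups contribute a syllable
to some reduced word for `g`. -/
def GraphProduct.supp (g : GraphProduct Γ Gv) : Set V :=
  {v | ∃ w, GraphProduct.IsReducedWord Γ Gv w g ∧ ∃ s ∈ w, s.1 = v}

/-- The link of a set of vertices: the set of vertices adjacent to every vertex of the
set. -/
def SimpleGraph.linkSet (S : Set V) : Set V := {u | ∀ v ∈ S, Γ.Adj u v}

end Words

/-!
Green's theorem, that any two reduced words for an element are shuffles of each other, follows by
letting the graph product act by left multiplication on the shuffle classes of reduced words: a
reduced word applied to the empty class returns its own class. Hence the first and last vertices of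
a product without cancellation can be read off from the factors.

Given `g x g⁻¹ = y`, split off from `g` a maximal right factor `b` over `link(supp x)` and then a
maximal left factor `a` over `U`, so that `g = a h b`. As `b` commutes with `x`, this gives
`h x = y' h`, where `y' = a⁻¹ y a` still has support in `U`. There is no cancellation in `y' h` by
the choice of `a`, nor in `h x` because no last vertex of `g` lies in `supp x`. Every last vertex of
`h` is one of `y' h = h x`, hence lies in `supp x ∪ link(supp x)`; but both sets have been excluded,
so `h = 1`.
-/

namespace GraphProduct

/-! ### Shuffles -/

section Shuffle

variable {V : Type*} {M : V → Type*} {Γ : SimpleGraph V} {w w' : List (Σ v, M v)} {u v : V}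

/-- Two words are shuffles of each other if one is obtained from the other by interchanging
consecutive syllables from adjacent vertex groups; this is `List.Perm` with adjacency required
in `swap`. -/
inductive Shuffle (Γ : SimpleGraph V) : List (Σ v, M v) → List (Σ v, M v) → Prop
  | nil : Shuffle Γ [] []
  | cons (s : Σ v, M v) {w w' : List (Σ v, M v)} : Shuffle Γ w w' → Shuffle Γ (s :: w) (s :: w')
  | swap {s t : Σ v, M v} (w : List (Σ v, M v)) :
      Γ.Adj s.1 t.1 → Shuffle Γ (s :: t :: w) (t :: s :: w)
  | trans {w₁ w₂ w₃ : List (Σ v, M v)} : Shuffle Γ w₁ w₂ → Shuffle Γ w₂ w₃ → Shuffle Γ w₁ w₃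

/-- The vertices of those syllables of a word that can be shuffled to its front. -/
def leading (Γ : SimpleGraph V) : List (Σ v, M v) → Set V
  | [] => ∅
  | s :: w => insert s.1 (Γ.neighborSet s.1 ∩ leading Γ w)

lemma mem_leading_cons {s : Σ v, M v} :
    v ∈ leading Γ (s :: w) ↔ v = s.1 ∨ Γ.Adj s.1 v ∧ v ∈ leading Γ w :=
  Iff.rfl

lemma mem_leading_append :
    v ∈ leading Γ (w ++ w') ↔
      v ∈ leading Γ w ∨ v ∈ leading Γ w' ∧ ∀ u ∈ w.map Sigma.fst, Γ.Adj v u := by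
  induction w with
  | nil => simp [leading]
  | cons s w ih =>
    simp only [List.cons_append, mem_leading_cons, ih, List.map_cons, List.forall_mem_cons,
      Γ.adj_comm s.1]
    tauto

namespace Shuffle

@[refl]
lemma refl (w : List (Σ v, M v)) : Shuffle Γ w w := by
  induction w with
  | nil => exact nil
  | cons s _ ih => exact ih.cons s

@[symm]
lemma symm (h : Shuffle Γ w w') : Shuffle Γ w' w := by
  induction h with
  | nil => exact nil
  | cons s _ ih => exact ih.cons s
  | swap w h => exact swap w h.symm
  | trans _ _ ih₁ ih₂ => exact ih₂.trans ih₁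

lemma perm (h : Shuffle Γ w w') : w.Perm w' := by
  induction h with
  | nil => exact .nil
  | cons s _ ih => exact ih.cons s
  | swap w _ => exact .swap _ _ w
  | trans _ _ ih₁ ih₂ => exact ih₁.trans ih₂

lemma leading_eq (h : Shuffle Γ w w') : leading Γ w = leading Γ w' := by
  induction h with
  | nil => rfl
  | cons s _ ih => simp only [leading, ih]
  | @swap s t w hst =>
    ext v
    have hts := hst.symm
    simp only [mem_leading_cons]
    constructor <;> rintro (rfl | ⟨hv, rfl | hv'⟩) <;> tauto
  | trans _ _ ih₁ ih₂ => exact ih₁.trans ih₂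

end Shuffle

lemma exists_shuffle_cons (h : v ∈ leading Γ w) : ∃ a w', Shuffle Γ w (⟨v, a⟩ :: w') := by
  induction w with
  | nil => exact h.elim
  | cons s w ih =>
    rcases mem_leading_cons.1 h with rfl | ⟨hs, hv⟩
    · exact ⟨s.2, w, .refl _⟩
    · obtain ⟨a, w', hw⟩ := ih hv
      exact ⟨a, s :: w', (hw.cons s).trans (.swap _ hs)⟩

variable [∀ v, One (M v)]

/-- Green's combinatorial form of being reduced: no syllable is trivial and none can be shuffled
next to a later syllable from the same vertex group. -/
def Reduced (Γ : SimpleGraph V) : List (Σ v, M v) → Prop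
  | [] => True
  | s :: w => s.2 ≠ 1 ∧ s.1 ∉ leading Γ w ∧ Reduced Γ w

lemma Reduced.ne_one (h : Reduced Γ w) : ∀ s ∈ w, s.2 ≠ 1 := by
  induction w with
  | nil => simp
  | cons s w ih => exact List.forall_mem_cons.2 ⟨h.1, ih h.2.2⟩

lemma Reduced.append (h : Reduced Γ w) (h' : Reduced Γ w')
    (hd : ∀ v ∈ w.map Sigma.fst, v ∉ leading Γ w') : Reduced Γ (w ++ w') := by
  induction w with
  | nil => exact h'
  | cons s w ih =>
    rw [List.map_cons, List.forall_mem_cons] at hd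
    refine ⟨h.1, fun hs => ?_, ih h.2.2 hd.2⟩
    exact (mem_leading_append.1 hs).elim h.2.1 fun hs' => hd.1 hs'.1

lemma Shuffle.reduced_iff (h : Shuffle Γ w w') : Reduced Γ w ↔ Reduced Γ w' := by
  induction h with
  | nil => rfl
  | cons s h ih => simp only [Reduced, ih, h.leading_eq]
  | swap w h =>
    have := h.symm
    have := h.ne
    have := h.ne'
    simp only [Reduced, mem_leading_cons]
    tauto
  | trans _ _ ih₁ ih₂ => exact ih₁.trans ih₂

open scoped Classical in
/-- The word `⟨v, a⟩ :: w`, with the syllable left out when it is trivial. -/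
noncomputable def prepend (v : V) (a : M v) (w : List (Σ v, M v)) : List (Σ v, M v) :=
  if a = 1 then w else ⟨v, a⟩ :: w

@[simp]
lemma prepend_one (v : V) (w : List (Σ v, M v)) : prepend v 1 w = w := if_pos rfl

lemma prepend_of_ne_one {a : M v} (ha : a ≠ 1) (w : List (Σ v, M v)) :
    prepend v a w = ⟨v, a⟩ :: w := if_neg ha

lemma Reduced.prepend (h : Reduced Γ w) (a : M v) (hv : v ∉ leading Γ w) :
    Reduced Γ (prepend v a w) := by
  by_cases ha : a = 1
  · rwa [ha, prepend_one]
  · rw [prepend_of_ne_one ha]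
    exact ⟨ha, hv, h⟩

lemma Reduced.exists_shuffle_prepend (h : Reduced Γ w) (v : V) :
    ∃ a w', Shuffle Γ w (GraphProduct.prepend v a w') ∧ Reduced Γ w' ∧ v ∉ leading Γ w' := by
  by_cases hv : v ∈ leading Γ w
  · obtain ⟨a, w', hw⟩ := exists_shuffle_cons hv
    have hr := hw.reduced_iff.1 h
    exact ⟨a, w', by rwa [prepend_of_ne_one hr.1], hr.2.2, hr.2.1⟩
  · exact ⟨1, w, by rw [prepend_one], h, hv⟩

lemma Shuffle.prepend (v : V) (a : M v) (h : Shuffle Γ w w') :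
    Shuffle Γ (prepend v a w) (prepend v a w') := by
  by_cases ha : a = 1
  · rwa [ha, prepend_one, prepend_one]
  · simpa only [prepend_of_ne_one ha] using h.cons _

lemma shuffle_prepend_comm (h : Γ.Adj u v) (a : M u) (b : M v) (w : List (Σ v, M v)) :
    Shuffle Γ (prepend u a (prepend v b w)) (prepend v b (prepend u a w)) := by
  unfold prepend
  split_ifs
  · rfl
  · rfl
  · rfl
  · exact .swap w h

lemma mem_leading_prepend (h : Γ.Adj u v) (a : M u) :
    v ∈ leading Γ (prepend u a w) ↔ v ∈ leading Γ w := by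
  by_cases ha : a = 1
  · rw [ha, prepend_one]
  · simp [prepend_of_ne_one ha, mem_leading_cons, h, h.ne']

open scoped Classical in
/-- Splits off the syllable at `v` that can be shuffled to the front of a word; its value is `1`
if there is none. -/
noncomputable def pull (Γ : SimpleGraph V) (v : V) :
    List (Σ v, M v) → M v × List (Σ v, M v)
  | [] => (1, [])
  | s :: w =>
    if h : s.1 = v then (h ▸ s.2, w)
    else if Γ.Adj s.1 v then ((pull Γ v w).1, s :: (pull Γ v w).2)
    else (1, s :: w)

lemma pull_of_notMem_leading (h : v ∉ leading Γ w) : pull Γ v w = (1, w) := by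
  induction w with
  | nil => rfl
  | cons s w ih =>
    rw [mem_leading_cons, not_or, not_and] at h
    rw [pull, dif_neg (Ne.symm h.1)]
    split_ifs with hs
    · rw [ih (h.2 hs)]
    · rfl

lemma pull_prepend (a : M v) (h : v ∉ leading Γ w) : pull Γ v (prepend v a w) = (a, w) := by
  by_cases ha : a = 1
  · rw [ha, prepend_one, pull_of_notMem_leading h]
  · simp [prepend_of_ne_one ha, pull]

lemma Shuffle.pull (v : V) (h : Shuffle Γ w w') :
    (pull Γ v w).1 = (pull Γ v w').1 ∧ Shuffle Γ (pull Γ v w).2 (pull Γ v w').2 := by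
  induction h with
  | nil => exact ⟨rfl, .nil⟩
  | cons s h ih =>
    simp only [GraphProduct.pull]
    split_ifs
    · exact ⟨rfl, h⟩
    · exact ⟨ih.1, ih.2.cons s⟩
    · exact ⟨rfl, h.cons s⟩
  | @swap s t w hst =>
    by_cases hs : s.1 = v
    · subst hs
      simp [GraphProduct.pull, hst.ne', hst.symm, Shuffle.refl]
    by_cases ht : t.1 = v
    · subst ht
      simp [GraphProduct.pull, hst.ne, hst, Shuffle.refl]
    by_cases hsv : Γ.Adj s.1 v <;> by_cases htv : Γ.Adj t.1 v <;>
      simp [GraphProduct.pull, hs, ht, hsv, htv, Shuffle.swap, hst]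
  | trans _ _ ih₁ ih₂ => exact ⟨ih₁.1.trans ih₂.1, ih₁.2.trans ih₂.2⟩

end Shuffle

/-! ### Left multiplication on normal forms -/

section LeftMul

variable {V : Type*} {Γ : SimpleGraph V} {M : V → Type*} [∀ v, Monoid (M v)]
  {w w' : List (Σ v, M v)} {u v : V}

/-- The effect on words of left multiplication by the syllable `⟨v, b⟩`: join it with the syllable
at `v` that can be shuffled to the front. -/
noncomputable def leftMul (Γ : SimpleGraph V) (v : V) (b : M v) (w : List (Σ v, M v)) :
    List (Σ v, M v) :=
  prepend v (b * (pull Γ v w).1) (pull Γ v w).2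

lemma leftMul_prepend (a b : M v) (hv : v ∉ leading Γ w) :
    leftMul Γ v b (prepend v a w) = prepend v (b * a) w := by
  rw [leftMul, pull_prepend a hv]

lemma leftMul_of_reduced_cons {s : Σ v, M v} (h : Reduced Γ (s :: w)) :
    leftMul Γ s.1 s.2 w = s :: w := by
  rw [leftMul, pull_of_notMem_leading h.2.1, mul_one, prepend_of_ne_one h.1]

lemma Shuffle.leftMul (v : V) (b : M v) (h : Shuffle Γ w w') :
    Shuffle Γ (leftMul Γ v b w) (leftMul Γ v b w') := by
  unfold GraphProduct.leftMul
  rw [(h.pull v).1]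
  exact (h.pull v).2.prepend _ _

lemma Reduced.leftMul (v : V) (b : M v) (h : Reduced Γ w) : Reduced Γ (leftMul Γ v b w) := by
  obtain ⟨a, w', hw, hr, hv⟩ := h.exists_shuffle_prepend v
  rw [(hw.leftMul v b).reduced_iff, leftMul_prepend a b hv]
  exact hr.prepend _ hv

lemma Reduced.shuffle_leftMul_one (v : V) (h : Reduced Γ w) :
    Shuffle Γ (GraphProduct.leftMul Γ v 1 w) w := by
  obtain ⟨a, w', hw, -, hv⟩ := h.exists_shuffle_prepend v
  have key := hw.leftMul v 1
  rw [leftMul_prepend a 1 hv, one_mul] at key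
  exact key.trans hw.symm

lemma Reduced.shuffle_leftMul_mul (v : V) (b c : M v) (h : Reduced Γ w) :
    Shuffle Γ (GraphProduct.leftMul Γ v (b * c) w)
      (GraphProduct.leftMul Γ v b (GraphProduct.leftMul Γ v c w)) := by
  obtain ⟨a, w', hw, -, hv⟩ := h.exists_shuffle_prepend v
  have hmul := hw.leftMul v (b * c)
  have hcomp := (hw.leftMul v c).leftMul v b
  rw [leftMul_prepend _ _ hv, mul_assoc] at hmul
  rw [leftMul_prepend _ _ hv, leftMul_prepend _ _ hv] at hcomp
  exact hmul.trans hcomp.symm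

lemma shuffle_leftMul_prepend_of_adj (h : Γ.Adj u v) (a : M u) (d : M v) (b : M v)
    (hv : v ∉ leading Γ w) :
    Shuffle Γ (leftMul Γ v b (prepend u a (prepend v d w)))
      (prepend u a (prepend v (b * d) w)) := by
  have key := (shuffle_prepend_comm h a d w).leftMul v b
  rw [leftMul_prepend d b (by rwa [mem_leading_prepend h])] at key
  exact key.trans (shuffle_prepend_comm h.symm _ _ w)

lemma Reduced.shuffle_leftMul_comm (huv : Γ.Adj u v) (b : M u) (c : M v) (h : Reduced Γ w) :
    Shuffle Γ (GraphProduct.leftMul Γ u b (GraphProduct.leftMul Γ v c w))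
      (GraphProduct.leftMul Γ v c (GraphProduct.leftMul Γ u b w)) := by
  obtain ⟨a, w₁, hw₁, hr₁, hu₁⟩ := h.exists_shuffle_prepend u
  obtain ⟨d, w₂, hw₂, -, hv⟩ := hr₁.exists_shuffle_prepend v
  have hw := hw₁.trans (hw₂.prepend u a)
  have hu (e : M v) : u ∉ leading Γ (GraphProduct.prepend v e w₂) := by
    rwa [hw₂.leading_eq, mem_leading_prepend huv.symm, ← mem_leading_prepend huv.symm e] at hu₁
  have hvu := ((hw.leftMul v c).trans (shuffle_leftMul_prepend_of_adj huv a d c hv)).leftMul u b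
  have huv' := (hw.leftMul u b).leftMul v c
  rw [leftMul_prepend _ _ (hu _)] at hvu huv'
  exact hvu.trans (huv'.trans (shuffle_leftMul_prepend_of_adj huv (b * a) d c hv)).symm

variable (Γ M) in
/-- Shuffling, as an equivalence relation on reduced words. -/
def shuffleSetoid : Setoid {w : List (Σ v, M v) // Reduced Γ w} where
  r w w' := Shuffle Γ w.1 w'.1
  iseqv := ⟨fun _ => .refl _, .symm, .trans⟩

variable (Γ M) in
/-- Reduced words up to shuffling. By Green's theorem they correspond to the elements of the graph
product, which is proved by letting the graph product act on them. -/
def NormalForm : Type _ := Quotient (shuffleSetoid Γ M)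

variable (Γ) in
/-- The action of a vertex group on normal forms by left multiplication. -/
noncomputable def vertexAction (v : V) : M v →* Function.End (NormalForm Γ M) where
  toFun b := Quotient.map (fun w => ⟨leftMul Γ v b w.1, w.2.leftMul v b⟩)
    fun _ _ h => Shuffle.leftMul v b h
  map_one' := funext <| Quotient.ind fun w => Quotient.sound (w.2.shuffle_leftMul_one v)
  map_mul' b c := funext <| Quotient.ind fun w => Quotient.sound (w.2.shuffle_leftMul_mul v b c)

lemma commute_vertexAction (h : Γ.Adj u v) (b : M u) (c : M v) :
    Commute (vertexAction Γ u b) (vertexAction Γ v c) :=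
  funext <| Quotient.ind fun w => Quotient.sound (w.2.shuffle_leftMul_comm h b c)

end LeftMul

section Lift

variable {V : Type} {Γ : SimpleGraph V} {Gv : V → Type} [∀ v, Group (Gv v)]

lemma commute_of {u v : V} (h : Γ.Adj u v) (a : Gv u) (b : Gv v) :
    Commute (of Γ Gv u a) (of Γ Gv v b) := by
  have hab : of Γ Gv u a * of Γ Gv v b * (of Γ Gv u a)⁻¹ * (of Γ Gv v b)⁻¹ = 1 :=
    (QuotientGroup.eq_one_iff _).2 (Subgroup.subset_normalClosure ⟨u, v, h, a, b, rfl⟩)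
  exact mul_inv_eq_iff_eq_mul.1 (mul_inv_eq_one.1 hab)

/-- The universal property of the graph product: homomorphisms from the vertex groups whose images
commute along the edges extend to the graph product. -/
def lift {N : Type*} [Monoid N] (f : ∀ v, Gv v →* N)
    (hf : ∀ ⦃u v⦄, Γ.Adj u v → ∀ (a : Gv u) (b : Gv v), Commute (f u a) (f v b)) :
    GraphProduct Γ Gv →* N :=
  QuotientGroup.lift _ (Monoid.CoprodI.lift f) <| Subgroup.normalClosure_le_normal <| by
    rintro _ ⟨u, v, h, a, b, rfl⟩
    simp only [SetLike.mem_coe, MonoidHom.mem_ker, ← map_inv, map_mul, Monoid.CoprodI.lift_of]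
    rw [(hf h a b).eq, mul_assoc (f v b), ← map_mul, mul_inv_cancel, map_one, mul_one, ← map_mul,
      mul_inv_cancel, map_one]

lemma lift_of {N : Type*} [Monoid N] (f : ∀ v, Gv v →* N)
    (hf : ∀ ⦃u v⦄, Γ.Adj u v → ∀ (a : Gv u) (b : Gv v), Commute (f u a) (f v b)) {v : V}
    (a : Gv v) : lift f hf (of Γ Gv v a) = f v a :=
  Monoid.CoprodI.lift_of f a

end Lift

section WordProd

variable {V : Type} {Γ : SimpleGraph V} {Gv : V → Type} [∀ v, Group (Gv v)]
  {w w' : List (Σ v, Gv v)}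

@[simp]
lemma wordProd_nil : wordProd Γ Gv [] = 1 := rfl

@[simp]
lemma wordProd_cons (s : Σ v, Gv v) (w : List (Σ v, Gv v)) :
    wordProd Γ Gv (s :: w) = of Γ Gv s.1 s.2 * wordProd Γ Gv w :=
  List.prod_cons

@[simp]
lemma wordProd_append (w w' : List (Σ v, Gv v)) :
    wordProd Γ Gv (w ++ w') = wordProd Γ Gv w * wordProd Γ Gv w' := by
  simp [wordProd]

lemma wordProd_surjective : Function.Surjective (wordProd Γ Gv) := by
  intro g
  obtain ⟨c, rfl⟩ := QuotientGroup.mk'_surjective _ g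
  induction c using Monoid.CoprodI.induction_on with
  | one => exact ⟨[], (map_one _).symm⟩
  | of v a => exact ⟨[⟨v, a⟩], mul_one _⟩
  | mul c d hc hd =>
    obtain ⟨w, hw⟩ := hc
    obtain ⟨w', hw'⟩ := hd
    exact ⟨w ++ w', by rw [wordProd_append, hw, hw']; exact (map_mul _ c d).symm⟩

lemma commute_wordProd (h : ∀ u ∈ w.map Sigma.fst, ∀ v ∈ w'.map Sigma.fst, Γ.Adj u v) :
    Commute (wordProd Γ Gv w) (wordProd Γ Gv w') := by
  refine Commute.list_prod_left _ _ fun x hx => Commute.list_prod_right _ _ fun y hy => ?_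
  obtain ⟨s, hs, rfl⟩ := List.mem_map.1 hx
  obtain ⟨t, ht, rfl⟩ := List.mem_map.1 hy
  exact commute_of (h _ (List.mem_map_of_mem hs) _ (List.mem_map_of_mem ht)) _ _

lemma Shuffle.wordProd_eq (h : Shuffle Γ w w') : wordProd Γ Gv w = wordProd Γ Gv w' := by
  induction h with
  | nil => rfl
  | cons s _ ih => rw [wordProd_cons, wordProd_cons, ih]
  | @swap s t w h =>
    simp only [wordProd_cons, ← mul_assoc, (commute_of h s.2 t.2).eq]
  | trans _ _ ih₁ ih₂ => exact ih₁.trans ih₂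

/-- The word obtained by reversing a word and inverting its syllables. -/
def invWord (w : List (Σ v, Gv v)) : List (Σ v, Gv v) :=
  (w.map fun s => ⟨s.1, s.2⁻¹⟩).reverse

lemma length_invWord (w : List (Σ v, Gv v)) : (invWord w).length = w.length := by
  simp [invWord]

lemma map_fst_invWord (w : List (Σ v, Gv v)) :
    (invWord w).map Sigma.fst = (w.map Sigma.fst).reverse := by
  simp [invWord, Function.comp_def]

lemma wordProd_invWord (w : List (Σ v, Gv v)) :
    wordProd Γ Gv (invWord w) = (wordProd Γ Gv w)⁻¹ := by
  simp [invWord, wordProd, List.prod_inv_reverse, List.map_reverse, Function.comp_def]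

end WordProd

/-! ### Green's normal form theorem -/

section NormalForm

variable {V : Type} {Γ : SimpleGraph V} {Gv : V → Type} [∀ v, Group (Gv v)]
  {w w' : List (Σ v, Gv v)}

variable (Γ Gv) in
/-- The action of the graph product on normal forms by left multiplication. -/
noncomputable def normalFormAction :
    GraphProduct Γ Gv →* Function.End (NormalForm Γ Gv) :=
  lift (vertexAction Γ) fun _ _ => commute_vertexAction

lemma normalFormAction_wordProd (h : Reduced Γ w) :
    normalFormAction Γ Gv (wordProd Γ Gv w) (Quotient.mk _ ⟨[], trivial⟩) =
      Quotient.mk _ ⟨w, h⟩ := by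
  induction w with
  | nil => rw [wordProd_nil, map_one]; rfl
  | cons s w ih =>
    rw [wordProd_cons, map_mul]
    change normalFormAction Γ Gv (of Γ Gv s.1 s.2) (normalFormAction Γ Gv (wordProd Γ Gv w) _) = _
    rw [ih h.2.2, normalFormAction, lift_of]
    exact congrArg _ (Subtype.ext (leftMul_of_reduced_cons h))

/-- Green's normal form theorem. -/
theorem Reduced.shuffle_of_wordProd_eq (h : Reduced Γ w) (h' : Reduced Γ w')
    (heq : wordProd Γ Gv w = wordProd Γ Gv w') : Shuffle Γ w w' := by
  have hmk := normalFormAction_wordProd h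
  rw [heq, normalFormAction_wordProd h'] at hmk
  exact (Quotient.exact hmk).symm

lemma exists_length_lt_of_not_reduced (h : ¬ Reduced Γ w) :
    ∃ w', wordProd Γ Gv w' = wordProd Γ Gv w ∧ w'.length < w.length ∧
      w'.map Sigma.fst ⊆ w.map Sigma.fst := by
  induction w with
  | nil => exact (h trivial).elim
  | cons s w ih =>
    by_cases hs : s.2 = 1
    · exact ⟨w, by simp [hs], by simp, by simp⟩
    by_cases hv : s.1 ∈ leading Γ w
    · obtain ⟨a, w', hw⟩ := exists_shuffle_cons hv
      have hfst := hw.symm.perm.map Sigma.fst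
      refine ⟨⟨s.1, s.2 * a⟩ :: w', ?_, ?_, ?_⟩
      · rw [wordProd_cons, wordProd_cons, hw.wordProd_eq, wordProd_cons, map_mul, mul_assoc]
      · simp [hw.perm.length_eq]
      · exact List.subset_cons_of_subset _ hfst.subset
    · obtain ⟨w', hprod, hlen, hfst⟩ := ih fun hw => h ⟨hs, hv, hw⟩
      exact ⟨s :: w', by simp [hprod], by simpa, List.cons_subset_cons _ hfst⟩

lemma exists_reduced_wordProd_eq (Γ : SimpleGraph V) (w : List (Σ v, Gv v)) :
    ∃ w', Reduced Γ w' ∧ wordProd Γ Gv w' = wordProd Γ Gv w ∧ w'.length ≤ w.length ∧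
      w'.map Sigma.fst ⊆ w.map Sigma.fst := by
  induction hn : w.length using Nat.strong_induction_on generalizing w with
  | _ n ih =>
    subst hn
    by_cases h : Reduced Γ w
    · exact ⟨w, h, rfl, le_rfl, List.Subset.refl _⟩
    obtain ⟨w₁, hprod₁, hlen₁, hfst₁⟩ := exists_length_lt_of_not_reduced h
    obtain ⟨w₂, hr, hprod₂, hlen₂, hfst₂⟩ := ih _ hlen₁ w₁ rfl
    exact ⟨w₂, hr, hprod₂.trans hprod₁, hlen₂.trans hlen₁.le, List.Subset.trans hfst₂ hfst₁⟩

lemma isReducedWord_iff {g : GraphProduct Γ Gv} :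
    IsReducedWord Γ Gv w g ↔ Reduced Γ w ∧ wordProd Γ Gv w = g := by
  refine ⟨fun ⟨hprod, _, hmin⟩ => ⟨?_, hprod⟩, fun ⟨hr, hprod⟩ => ⟨hprod, hr.ne_one, ?_⟩⟩
  · by_contra h
    obtain ⟨w', hprod', hlen, -⟩ := exists_length_lt_of_not_reduced h
    exact hlen.not_ge (hmin w' (hprod'.trans hprod))
  · intro w' hprod'
    obtain ⟨w'', hr', hprod'', hlen, -⟩ := exists_reduced_wordProd_eq Γ w'
    have hsh := hr.shuffle_of_wordProd_eq hr' (hprod.trans (hprod''.trans hprod').symm)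
    exact hsh.perm.length_eq.trans_le hlen

end NormalForm

section ReducedWord

variable {V : Type} {Γ : SimpleGraph V} {Gv : V → Type} [∀ v, Group (Gv v)]
  {w w' : List (Σ v, Gv v)} {g x : GraphProduct Γ Gv}

lemma exists_isReducedWord (g : GraphProduct Γ Gv) : ∃ w, IsReducedWord Γ Gv w g := by
  obtain ⟨w, rfl⟩ := wordProd_surjective g
  obtain ⟨w', hr, hprod, -⟩ := exists_reduced_wordProd_eq Γ w
  exact ⟨w', isReducedWord_iff.2 ⟨hr, hprod⟩⟩

namespace IsReducedWord

lemma shuffle (hw : IsReducedWord Γ Gv w g) (hw' : IsReducedWord Γ Gv w' g) : Shuffle Γ w w' :=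
  (isReducedWord_iff.1 hw).1.shuffle_of_wordProd_eq (isReducedWord_iff.1 hw').1
    (hw.1.trans hw'.1.symm)

lemma of_shuffle (hw : IsReducedWord Γ Gv w g) (h : Shuffle Γ w w') : IsReducedWord Γ Gv w' g :=
  have hr := isReducedWord_iff.1 hw
  isReducedWord_iff.2 ⟨h.reduced_iff.1 hr.1, h.wordProd_eq.symm.trans hr.2⟩

lemma inv (hw : IsReducedWord Γ Gv w g) : IsReducedWord Γ Gv (invWord w) g⁻¹ := by
  obtain ⟨hprod, hne, hmin⟩ := hw
  refine ⟨by rw [wordProd_invWord, hprod], ?_, fun w' hw' => ?_⟩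
  · rintro s hs
    obtain ⟨t, ht, rfl⟩ := List.mem_map.1 (List.mem_reverse.1 hs)
    exact inv_ne_one.2 (hne t ht)
  · rw [length_invWord, ← length_invWord w']
    exact hmin _ (by rw [wordProd_invWord, hw', inv_inv])

lemma tail {s : Σ v, Gv v} (hw : IsReducedWord Γ Gv (s :: w) g) :
    IsReducedWord Γ Gv w (wordProd Γ Gv w) :=
  isReducedWord_iff.2 ⟨(isReducedWord_iff.1 hw).1.2.2, rfl⟩

lemma mem_supp_iff (hw : IsReducedWord Γ Gv w g) {v : V} :
    v ∈ supp Γ Gv g ↔ v ∈ w.map Sigma.fst := by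
  rw [List.mem_map]
  refine ⟨fun ⟨w', hw', s, hs, hv⟩ => ⟨s, ?_, hv⟩, fun hv => ⟨w, hw, hv⟩⟩
  exact (hw'.shuffle hw).perm.mem_iff.1 hs

end IsReducedWord

lemma supp_wordProd_subset (w : List (Σ v, Gv v)) :
    supp Γ Gv (wordProd Γ Gv w) ⊆ {v | v ∈ w.map Sigma.fst} := by
  obtain ⟨w', hr, hprod, -, hfst⟩ := exists_reduced_wordProd_eq Γ w
  exact fun v hv => hfst ((isReducedWord_iff.2 ⟨hr, hprod⟩).mem_supp_iff.1 hv)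

lemma supp_of_subset (v : V) (a : Gv v) : supp Γ Gv (of Γ Gv v a) ⊆ {v} := by
  have h := supp_wordProd_subset (Γ := Γ) [⟨v, a⟩]
  rw [wordProd_cons, wordProd_nil, mul_one] at h
  simpa using h

lemma supp_one : supp Γ Gv 1 = ∅ :=
  Set.subset_empty_iff.1 (by simpa using supp_wordProd_subset (Γ := Γ) (Gv := Gv) [])

lemma supp_mul_subset (g h : GraphProduct Γ Gv) :
    supp Γ Gv (g * h) ⊆ supp Γ Gv g ∪ supp Γ Gv h := by
  obtain ⟨w, hw⟩ := exists_isReducedWord g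
  obtain ⟨w', hw'⟩ := exists_isReducedWord h
  intro v hv
  rw [← hw.1, ← hw'.1, ← wordProd_append] at hv
  simpa only [Set.mem_union, hw.mem_supp_iff, hw'.mem_supp_iff, List.map_append,
    List.mem_append, Set.mem_ofPred_eq] using supp_wordProd_subset _ hv

@[simp]
lemma supp_inv (g : GraphProduct Γ Gv) : supp Γ Gv g⁻¹ = supp Γ Gv g := by
  obtain ⟨w, hw⟩ := exists_isReducedWord g
  ext v
  rw [hw.mem_supp_iff, hw.inv.mem_supp_iff, map_fst_invWord, List.mem_reverse]

lemma subset_linkSet_comm {S T : Set V} :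
    S ⊆ SimpleGraph.linkSet Γ T ↔ T ⊆ SimpleGraph.linkSet Γ S :=
  ⟨fun h v hv _ hu => (h hu v hv).symm, fun h v hv _ hu => (h hu v hv).symm⟩

lemma commute_of_supp_subset_linkSet (h : supp Γ Gv g ⊆ SimpleGraph.linkSet Γ (supp Γ Gv x)) :
    Commute g x := by
  obtain ⟨w, hw⟩ := exists_isReducedWord g
  obtain ⟨w', hw'⟩ := exists_isReducedWord x
  rw [← hw.1, ← hw'.1]
  exact commute_wordProd fun u hu v hv => h (hw.mem_supp_iff.2 hu) v (hw'.mem_supp_iff.2 hv)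

end ReducedWord

/-! ### First and last vertices -/

section FirstLast

variable {V : Type} {Γ : SimpleGraph V} {Gv : V → Type} [∀ v, Group (Gv v)]
  {w : List (Σ v, Gv v)} {g h : GraphProduct Γ Gv}

/-- The vertices of the first syllables of the reduced words for `g`. -/
def firstVertices (g : GraphProduct Γ Gv) : Set V :=
  {v | ∃ a w, IsReducedWord Γ Gv (⟨v, a⟩ :: w) g}

/-- The vertices of the last syllables of the reduced words for `g`. -/
def lastVertices (g : GraphProduct Γ Gv) : Set V :=
  {v | ∃ a w, IsReducedWord Γ Gv (w ++ [⟨v, a⟩]) g}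

lemma IsReducedWord.firstVertices_eq (hw : IsReducedWord Γ Gv w g) :
    firstVertices g = leading Γ w := by
  ext v
  refine ⟨fun ⟨a, w', hw'⟩ => ?_, fun hv => ?_⟩
  · rw [(hw.shuffle hw').leading_eq]
    exact Or.inl rfl
  · obtain ⟨a, w', hsh⟩ := exists_shuffle_cons hv
    exact ⟨a, w', hw.of_shuffle hsh⟩

lemma firstVertices_subset_supp (g : GraphProduct Γ Gv) : firstVertices g ⊆ supp Γ Gv g :=
  fun v ⟨a, _, hw⟩ => ⟨_, hw, ⟨v, a⟩, List.mem_cons_self, rfl⟩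

lemma firstVertices_inv (g : GraphProduct Γ Gv) : firstVertices g⁻¹ = lastVertices g := by
  ext v
  refine ⟨fun ⟨a, w, hw⟩ => ⟨a⁻¹, invWord w, ?_⟩, fun ⟨a, w, hw⟩ => ⟨a⁻¹, invWord w, ?_⟩⟩
  · simpa [invWord] using hw.inv
  · simpa [invWord] using hw.inv

lemma lastVertices_inv (g : GraphProduct Γ Gv) : lastVertices g⁻¹ = firstVertices g := by
  rw [← firstVertices_inv, inv_inv]

lemma lastVertices_subset_supp (g : GraphProduct Γ Gv) : lastVertices g ⊆ supp Γ Gv g := by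
  simpa only [firstVertices_inv, supp_inv] using firstVertices_subset_supp g⁻¹

lemma eq_one_of_firstVertices_eq_empty (hg : firstVertices g = ∅) : g = 1 := by
  obtain ⟨w, hw⟩ := exists_isReducedWord g
  cases w with
  | nil => exact hw.1.symm
  | cons s w => exact (hg.subset ⟨s.2, w, hw⟩).elim

/-- No cancellation occurs in the product `g * h`: reduced words for `g` and `h` can be concatenated
to a reduced word. -/
def IsReducedMul (g h : GraphProduct Γ Gv) : Prop :=
  ∃ w w', IsReducedWord Γ Gv w g ∧ IsReducedWord Γ Gv w' h ∧ IsReducedWord Γ Gv (w ++ w') (g * h)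

lemma isReducedMul_of_disjoint_firstVertices (hd : Disjoint (supp Γ Gv g) (firstVertices h)) :
    IsReducedMul g h := by
  obtain ⟨w, hw⟩ := exists_isReducedWord g
  obtain ⟨w', hw'⟩ := exists_isReducedWord h
  have ⟨hr, hprod⟩ := isReducedWord_iff.1 hw
  have ⟨hr', hprod'⟩ := isReducedWord_iff.1 hw'
  refine ⟨w, w', hw, hw', isReducedWord_iff.2 ⟨hr.append hr' fun v hv => ?_, ?_⟩⟩
  · rw [← hw'.firstVertices_eq]
    exact Set.disjoint_left.1 hd (hw.mem_supp_iff.2 hv)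
  · rw [wordProd_append, hprod, hprod']

namespace IsReducedMul

lemma inv (hgh : IsReducedMul g h) : IsReducedMul h⁻¹ g⁻¹ := by
  obtain ⟨w, w', hw, hw', hww'⟩ := hgh
  refine ⟨_, _, hw'.inv, hw.inv, ?_⟩
  simpa [invWord] using hww'.inv

lemma firstVertices_mul (hgh : IsReducedMul g h) :
    firstVertices (g * h) =
      firstVertices g ∪ firstVertices h ∩ SimpleGraph.linkSet Γ (supp Γ Gv g) := by
  obtain ⟨w, w', hw, hw', hww'⟩ := hgh
  ext v
  simp only [hw.firstVertices_eq, hw'.firstVertices_eq, hww'.firstVertices_eq, mem_leading_append,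
    Set.mem_union, Set.mem_inter_iff, SimpleGraph.linkSet, Set.mem_ofPred_eq, hw.mem_supp_iff]

lemma lastVertices_mul (hgh : IsReducedMul g h) :
    lastVertices (g * h) =
      lastVertices h ∪ lastVertices g ∩ SimpleGraph.linkSet Γ (supp Γ Gv h) := by
  simpa only [← mul_inv_rev, firstVertices_inv, supp_inv] using hgh.inv.firstVertices_mul

end IsReducedMul

lemma isReducedMul_of_disjoint_lastVertices (hd : Disjoint (lastVertices g) (supp Γ Gv h)) :
    IsReducedMul g h := by
  rw [← firstVertices_inv, ← supp_inv h] at hd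
  simpa only [inv_inv] using (isReducedMul_of_disjoint_firstVertices hd.symm).inv

lemma exists_mul_eq_disjoint_firstVertices (S : Set V) (g : GraphProduct Γ Gv) :
    ∃ a h, a * h = g ∧ supp Γ Gv a ⊆ S ∧ Disjoint S (firstVertices h) := by
  obtain ⟨w, hw⟩ := exists_isReducedWord g
  induction hn : w.length using Nat.strong_induction_on generalizing g w with
  | _ n ih =>
    subst hn
    by_cases hd : Disjoint S (firstVertices g)
    · exact ⟨1, g, one_mul g, by simp [supp_one], hd⟩
    obtain ⟨v, hvS, b, w', hw'⟩ := Set.not_disjoint_iff.1 hd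
    have hlen : w'.length < w.length := by simp [(hw.shuffle hw').perm.length_eq]
    obtain ⟨a, h, hah, ha, hh⟩ := ih _ hlen _ w' hw'.tail rfl
    refine ⟨of Γ Gv v b * a, h, ?_, (supp_mul_subset _ _).trans (Set.union_subset ?_ ha), hh⟩
    · rw [mul_assoc, hah, ← hw'.1, wordProd_cons]
    · exact (supp_of_subset v b).trans (Set.singleton_subset_iff.2 hvS)

lemma exists_mul_eq_disjoint_lastVertices (S : Set V) (g : GraphProduct Γ Gv) :
    ∃ h b, h * b = g ∧ supp Γ Gv b ⊆ S ∧ Disjoint (lastVertices h) S := by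
  obtain ⟨b, h, hbh, hb, hh⟩ := exists_mul_eq_disjoint_firstVertices S g⁻¹
  refine ⟨h⁻¹, b⁻¹, ?_, by rwa [supp_inv], by rw [lastVertices_inv]; exact hh.symm⟩
  rw [← mul_inv_rev, hbh, inv_inv]

end FirstLast

/-! ### Conjugation into a full subgroup -/

section Conjugation

variable {V : Type} {Γ : SimpleGraph V} {Gv : V → Type} [∀ v, Group (Gv v)] {U : Set V}
  {g h x y : GraphProduct Γ Gv}

lemma eq_one_of_mul_eq_mul (hxy : h * x = y * h) (hy : Disjoint (supp Γ Gv y) (firstVertices h))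
    (hx : Disjoint (lastVertices h) (supp Γ Gv x))
    (hlink : Disjoint (lastVertices h) (Γ.linkSet (supp Γ Gv x))) : h = 1 := by
  have hsub : lastVertices h ⊆ supp Γ Gv x ∪ Γ.linkSet (supp Γ Gv x) := calc
    lastVertices h ⊆ lastVertices (y * h) := by
      rw [(isReducedMul_of_disjoint_firstVertices hy).lastVertices_mul]
      exact Set.subset_union_left
    _ = lastVertices x ∪ lastVertices h ∩ Γ.linkSet (supp Γ Gv x) := by
      rw [← hxy, (isReducedMul_of_disjoint_lastVertices hx).lastVertices_mul]
    _ ⊆ supp Γ Gv x ∪ Γ.linkSet (supp Γ Gv x) :=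
      Set.union_subset_union (lastVertices_subset_supp x) Set.inter_subset_right
  have hempty : firstVertices h⁻¹ = ∅ := by
    rw [firstVertices_inv]
    exact (Disjoint.sup_right hx hlink).eq_bot_of_le hsub
  exact inv_eq_one.1 (eq_one_of_firstVertices_eq_empty hempty)

lemma exists_isReducedMul_of_supp_conj_subset (hU : supp Γ Gv (g * x * g⁻¹) ⊆ U)
    (hx : Disjoint (lastVertices g) (supp Γ Gv x)) :
    ∃ a b, a * b = g ∧ IsReducedMul a b ∧ supp Γ Gv a ⊆ U ∧
      supp Γ Gv b ⊆ Γ.linkSet (supp Γ Gv x) := by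
  obtain ⟨k, b, rfl, hb, hk⟩ := exists_mul_eq_disjoint_lastVertices (Γ.linkSet (supp Γ Gv x)) g
  obtain ⟨a, h, rfl, ha, hh⟩ := exists_mul_eq_disjoint_firstVertices U k
  have hkb := isReducedMul_of_disjoint_lastVertices (hk.mono_right hb)
  have hah := isReducedMul_of_disjoint_firstVertices (hh.mono_left ha)
  have hlast : lastVertices h ⊆ lastVertices (a * h) := by
    rw [hah.lastVertices_mul]
    exact Set.subset_union_left
  have hkx : Disjoint (lastVertices (a * h)) (supp Γ Gv x) := by
    rw [hkb.lastVertices_mul] at hx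
    exact Set.disjoint_left.2 fun v hv hvx => Set.disjoint_left.1 hx
      (Or.inr ⟨hv, subset_linkSet_comm.1 hb hvx⟩) hvx
  have hxy : h * x = a⁻¹ * (a * h * b * x * (a * h * b)⁻¹) * a * h := by
    rw [mul_assoc _ b x, (commute_of_supp_subset_linkSet hb).eq]
    group
  have hy : supp Γ Gv (a⁻¹ * (a * h * b * x * (a * h * b)⁻¹) * a) ⊆ U :=
    (supp_mul_subset _ _).trans <| Set.union_subset ((supp_mul_subset _ _).trans <|
      Set.union_subset (by rwa [supp_inv]) hU) ha
  obtain rfl : h = 1 :=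
    eq_one_of_mul_eq_mul hxy (hh.mono_left hy) (hkx.mono_left hlast) (hk.mono_left hlast)
  rw [mul_one] at hkb ⊢
  exact ⟨a, b, rfl, hkb, ha, hb⟩

end Conjugation

end GraphProduct

theorem conjugator_normal_form_general {V : Type} (Γ : SimpleGraph V) (Gv : V → Type)
    [∀ v, Group (Gv v)] (U : Set V) (g x y : GraphProduct Γ Gv) (hconj : g * x * g⁻¹ = y)
    (hsuppy : GraphProduct.supp Γ Gv y ⊆ U)
    (hlast : ∀ w, GraphProduct.IsReducedWord Γ Gv w g →
      ∀ s, w.getLast? = some s → s.1 ∉ GraphProduct.supp Γ Gv x) :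
    ∃ w₁ w₂ : List (Σ v : V, Gv v),
      GraphProduct.IsReducedWord Γ Gv (w₁ ++ w₂) g ∧
      (∀ s ∈ w₁, s.1 ∈ U) ∧
      (∀ s ∈ w₂, s.1 ∈ SimpleGraph.linkSet Γ (GraphProduct.supp Γ Gv x)) := by
  subst hconj
  have hx : Disjoint (GraphProduct.lastVertices g) (GraphProduct.supp Γ Gv x) :=
    Set.disjoint_left.2 fun v ⟨a, w, hw⟩ => hlast _ hw ⟨v, a⟩ List.getLast?_concat
  obtain ⟨a, b, rfl, ⟨w₁, w₂, hw₁, hw₂, hw⟩, ha, hb⟩ :=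
    GraphProduct.exists_isReducedMul_of_supp_conj_subset hsuppy hx
  exact ⟨w₁, w₂, hw, fun s hs => ha (hw₁.mem_supp_iff.2 (List.mem_map_of_mem hs)),
    fun s hs => hb (hw₂.mem_supp_iff.2 (List.mem_map_of_mem hs))⟩

/-- Antolin–Minasyan's Lemma 3.2: in a non-degenerate graph product, if `x ≠ 1`,
`g x g⁻¹ = y`, the support of `y` is contained in `U`, and no reduced word for `g`
ends with a syllable whose vertex lies in the support of `x`, then `g` has a reduced
expression `(h₁, …, h_r, h_{r+1}, …, h_n)` whose first `r` syllables lie in vertex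
groups over `U` and whose remaining syllables lie in vertex groups over
`link(supp x)`. -/
theorem conjugator_normal_form {V : Type} [Fintype V] (Γ : SimpleGraph V) (Gv : V → Type)
    [∀ v, Group (Gv v)] (hnd : GraphProduct.NonDegenerate Gv)
    (U : Set V) (g x y : GraphProduct Γ Gv)
    (hx : x ≠ 1) (hconj : g * x * g⁻¹ = y)
    (hsuppy : GraphProduct.supp Γ Gv y ⊆ U)
    (hlast : ∀ w, GraphProduct.IsReducedWord Γ Gv w g →
      ∀ s, w.getLast? = some s → s.1 ∉ GraphProduct.supp Γ Gv x) :
    ∃ w₁ w₂ : List (Σ v : V, Gv v),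
      GraphProduct.IsReducedWord Γ Gv (w₁ ++ w₂) g ∧
      (∀ s ∈ w₁, s.1 ∈ U) ∧
      (∀ s ∈ w₂, s.1 ∈ SimpleGraph.linkSet Γ (GraphProduct.supp Γ Gv x)) :=
  conjugator_normal_form_general Γ Gv U g x y hconj hsuppy hlast
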